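/- (Leibniz Type Rule I.) Let 0 < α < 1, 0 < β ≤ 1, and set ξ := (1−β)(1−α). Let a < b, Ψ : ℝ → ℝ strictly increasing and continuously differentiable on [a,b] with Ψ'(t) > 0 for all t ∈ [a,b]. Suppose f = h ∘ Ψ and g = w ∘ Ψ with h, w : ℝ → ℝ real-analytic with everywhere-convergent power series, and write f⁽ᵐ⁾(x) := h⁽ᵐ⁾(Ψ(x)). Then for every x ∈ (a,b): (^{H}D^{α,β;Ψ}(f·g))(x) = Σ_{l=0}^∞ Σ_{m=l}^∞ binom(−ξ, m−l) binom(α+ξ, l) f⁽ᵐ⁾(x) (^{RL}D^{α−m;Ψ} g)(x) − Σ_{k=0}^∞ binom(−ξ, k) (I^{ξ+k;Ψ}g)(a) f⁽ᵏ⁾(a) (Ψ(x) − Ψ(a))^{−(α+ξ)} / Γ(β(1−α)), where (I^{γ;Ψ}g)(a) := 0 for γ > 0 and := g(a) for γ = 0, all series converging. -/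

import Mathlib

open Real

/-- Generalized binomial coefficient `binom(γ, n) = γ(γ-1)⋯(γ-n+1)/n!`. -/
noncomputable def genBinom (γ : ℝ) (n : ℕ) : ℝ :=
  (∏ i ∈ Finset.range n, (γ - (i : ℝ))) / (n.factorial : ℝ)

/-- Ψ-Riemann–Liouville fractional integral of order `α` with base point `a`;
by convention the order-0 integral is the identity. -/
noncomputable def psiI (a : ℝ) (Ψ f : ℝ → ℝ) (α : ℝ) (x : ℝ) : ℝ :=
  if α = 0 then f x
  else (Real.Gamma α)⁻¹ * ∫ t in a..x, deriv Ψ t * (Ψ x - Ψ t) ^ (α - 1) * f t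

/-- Ψ-Riemann–Liouville fractional derivative of order `γ` (for `γ ≤ 0` it is the
fractional integral of order `-γ`, the order-0 case being the identity). -/
noncomputable def psiRLD (a : ℝ) (Ψ f : ℝ → ℝ) (γ : ℝ) (x : ℝ) : ℝ :=
  if γ ≤ 0 then psiI a Ψ f (-γ) x
  else (deriv Ψ x)⁻¹ * deriv (fun y => psiI a Ψ f (1 - γ) y) x

/-- Ψ-Caputo fractional derivative of order `γ` (for `γ ≤ 0` it is the
fractional integral of order `-γ`). -/
noncomputable def psiCD (a : ℝ) (Ψ f : ℝ → ℝ) (γ : ℝ) (x : ℝ) : ℝ :=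
  if γ ≤ 0 then psiI a Ψ f (-γ) x
  else psiI a Ψ (fun t => (deriv Ψ t)⁻¹ * deriv f t) (1 - γ) x

/-- Ψ-Hilfer fractional derivative of order `α` and type `β`. -/
noncomputable def psiHD (a : ℝ) (Ψ f : ℝ → ℝ) (α β : ℝ) (x : ℝ) : ℝ :=
  psiI a Ψ
    (fun y => (deriv Ψ y)⁻¹ * deriv (fun z => psiI a Ψ f ((1 - β) * (1 - α)) z) y)
    (β * (1 - α)) x

/-- Classical Riemann–Liouville fractional integral with base point `a`. -/
noncomputable def rlI (a : ℝ) (α : ℝ) (f : ℝ → ℝ) (x : ℝ) : ℝ :=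
  if α = 0 then f x
  else (Real.Gamma α)⁻¹ * ∫ t in a..x, (x - t) ^ (α - 1) * f t

/-- Classical Riemann–Liouville fractional derivative (fractional integral for `γ ≤ 0`). -/
noncomputable def rlD (a : ℝ) (γ : ℝ) (f : ℝ → ℝ) (x : ℝ) : ℝ :=
  if γ ≤ 0 then rlI a (-γ) f x
  else deriv (fun y => rlI a (1 - γ) f y) x

/-- Classical Caputo fractional derivative (fractional integral for `γ ≤ 0`). -/
noncomputable def capD (a : ℝ) (γ : ℝ) (f : ℝ → ℝ) (x : ℝ) : ℝ :=
  if γ ≤ 0 then rlI a (-γ) f x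
  else rlI a (1 - γ) (deriv f) x

/-- Classical Hilfer fractional derivative of order `α` and type `β`. -/
noncomputable def hilD (a : ℝ) (α β : ℝ) (f : ℝ → ℝ) (x : ℝ) : ℝ :=
  rlI a (β * (1 - α))
    (fun y => deriv (fun z => rlI a ((1 - β) * (1 - α)) f z) y) x

/-- Hadamard fractional integral with base point `a`. -/
noncomputable def hadI (a : ℝ) (α : ℝ) (f : ℝ → ℝ) (x : ℝ) : ℝ :=
  if α = 0 then f x
  else (Real.Gamma α)⁻¹ * ∫ t in a..x, (Real.log x - Real.log t) ^ (α - 1) * f t / t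

/-- Caputo–Hadamard fractional derivative (Hadamard fractional integral for `γ ≤ 0`). -/
noncomputable def chD (a : ℝ) (γ : ℝ) (f : ℝ → ℝ) (x : ℝ) : ℝ :=
  if γ ≤ 0 then hadI a (-γ) f x
  else hadI a (1 - γ) (fun t => t * deriv f t) x

/-- `h` is real-analytic with a power series converging on all of `ℝ`. -/
def EntireReal (h : ℝ → ℝ) : Prop :=
  ∃ p : FormalMultilinearSeries ℝ ℝ ℝ, HasFPowerSeriesOnBall h p 0 ⊤

/-!
The substitution `s = Ψ t` turns the `Ψ`-operators into the classical ones on `[Ψ a, ∞)`, so put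
`A = Ψ a` and `X = Ψ x`. For `C¹` functions `F` the fundamental theorem of calculus and the
semigroup law `I^η I^ξ = I^(η+ξ)` give, for all `γ < 1`,
`D^γ F = F(A) (X - A)^(-γ) / Γ(1-γ) + I^(1-γ) F'`,
and show that the Hilfer derivative is `D^α` minus the boundary term
`(I^ξ F)(A) (X - A)^(-(α+ξ)) / Γ(β(1-α))`.

Expanding `h` in its Taylor series at `X` under the integral sign yields
`I^γ (h G) = ∑ₘ binom(-γ, m) h⁽ᵐ⁾(X) I^(γ+m) G`.
Applied to `h w'` and `h' w`, and combined by Pascal's rule, this gives the Leibniz rule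
`D^α (h w) = ∑ₘ binom(α, m) h⁽ᵐ⁾(X) D^(α-m) w`.
Vandermonde's identity for `α = -ξ + (α + ξ)` then splits it into the double series; this series
converges absolutely because `D^(α-m) w = O(ρᵐ / m!)` for some `ρ`.
-/

open Set Filter Topology MeasureTheory
open Finset.HasAntidiagonal (antidiagonal)

section GenBinom

lemma genBinom_zero (γ : ℝ) : genBinom γ 0 = 1 := by simp [genBinom]

lemma genBinom_succ (γ : ℝ) (n : ℕ) :
    genBinom γ (n + 1) = genBinom γ n * ((γ - n) / (n + 1)) := by
  rw [genBinom, genBinom, Finset.prod_range_succ, Nat.factorial_succ]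
  push_cast
  field_simp

lemma genBinom_eq_choose (γ : ℝ) (n : ℕ) : genBinom γ n = Ring.choose γ n := by
  rw [Ring.choose_eq_smul, ← Polynomial.aeval_eq_smeval, ← Polynomial.eval_map_algebraMap,
    descPochhammer_map, descPochhammer_eval_eq_prod_range, smul_eq_mul, genBinom, div_eq_inv_mul]

lemma genBinom_add_one_succ (γ : ℝ) (n : ℕ) :
    genBinom (γ + 1) (n + 1) = genBinom γ n + genBinom γ (n + 1) := by
  simp only [genBinom_eq_choose, Ring.choose_succ_succ]

lemma sum_antidiagonal_genBinom_mul_genBinom (p q : ℝ) (m : ℕ) :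
    ∑ i ∈ antidiagonal m, genBinom p i.1 * genBinom q i.2 = genBinom (p + q) m := by
  simp only [genBinom_eq_choose]
  exact (Ring.add_choose_eq m (Commute.all p q)).symm

lemma abs_genBinom_le (γ : ℝ) (n : ℕ) : |genBinom γ n| ≤ (1 + |γ|) ^ n := by
  induction n with
  | zero => simp [genBinom_zero]
  | succ n ih =>
    have hfactor : |(γ - n) / (n + 1)| ≤ 1 + |γ| := by
      rw [abs_div, abs_of_pos (by positivity : (0 : ℝ) < n + 1), div_le_iff₀ (by positivity)]
      calc |γ - n| ≤ |γ| + n := by simpa using abs_sub γ (n : ℝ)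
        _ ≤ (1 + |γ|) * (n + 1) := by nlinarith [abs_nonneg γ, Nat.cast_nonneg (α := ℝ) n]
    rw [genBinom_succ, abs_mul, pow_succ]
    gcongr

end GenBinom

namespace EntireReal

variable {h : ℝ → ℝ}

lemma contDiff (hh : EntireReal h) {n : WithTop ℕ∞} : ContDiff ℝ n h := by
  obtain ⟨p, hp⟩ := hh
  exact AnalyticOnNhd.contDiff (by simpa using hp.analyticOnNhd)

protected lemma deriv (hh : EntireReal h) : EntireReal (deriv h) := by
  obtain ⟨p, hp⟩ := hh
  exact ⟨_, (ContinuousLinearMap.apply ℝ ℝ (1 : ℝ)).comp_hasFPowerSeriesOnBall hp.fderiv⟩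

lemma hasSum_taylor (hh : EntireReal h) (x y : ℝ) :
    HasSum (fun m : ℕ => iteratedDeriv m h x / m.factorial * y ^ m) (h (x + y)) := by
  obtain ⟨p, hp⟩ := hh
  have hpx : HasFPowerSeriesOnBall h (p.changeOrigin x) x ⊤ := by
    simpa using hp.changeOrigin (y := x) (by simp)
  refine (hpx.hasSum_iteratedFDeriv (y := y) (by simp)).congr_fun fun m => ?_
  rw [iteratedFDeriv_apply_eq_iteratedDeriv_mul_prod]
  simp [div_eq_inv_mul]
  ring

lemma summable_abs_taylor (hh : EntireReal h) (x : ℝ) {r : ℝ} (hr : 0 ≤ r) :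
    Summable fun m : ℕ => |iteratedDeriv m h x| / m.factorial * r ^ m := by
  refine (hh.hasSum_taylor x r).summable.abs.congr fun m => ?_
  rw [abs_mul, abs_div, abs_of_nonneg (pow_nonneg hr m), Nat.abs_cast]

end EntireReal

section PowKernel

/-- The Riemann–Liouville kernel `y ^ (δ - 1) / Γ(δ)`: the fractional integral of order `γ > 0` is
convolution with `powKernel γ`, and it maps `powKernel δ` to `powKernel (γ + δ)`.
Since `Γ(0) = 0` in Mathlib, `powKernel 0` is zero. -/
noncomputable def powKernel (δ y : ℝ) : ℝ :=
  y ^ (δ - 1) / Gamma δ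

variable {γ δ y : ℝ}

lemma powKernel_zero_left (y : ℝ) : powKernel 0 y = 0 := by simp [powKernel]

lemma powKernel_one_left (y : ℝ) : powKernel 1 y = 1 := by simp [powKernel]

lemma powKernel_zero_right (hδ : 1 < δ) : powKernel δ 0 = 0 := by
  rw [powKernel, zero_rpow (by linarith), zero_div]

lemma powKernel_nonneg (hδ : 0 < δ) (hy : 0 ≤ y) : 0 ≤ powKernel δ y :=
  div_nonneg (rpow_nonneg hy _) (Gamma_pos_of_pos hδ).le

lemma powKernel_le_powKernel (hδ : 1 ≤ δ) {z : ℝ} (hy : 0 ≤ y) (hyz : y ≤ z) :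
    powKernel δ y ≤ powKernel δ z :=
  div_le_div_of_nonneg_right (rpow_le_rpow hy hyz (by linarith))
    (Gamma_pos_of_pos (by linarith)).le

lemma continuous_powKernel (hδ : 1 ≤ δ) : Continuous (powKernel δ) :=
  (continuous_id.rpow_const fun _ => Or.inr (by simpa using hδ)).div_const _

lemma powKernel_mul_self (hδ : 0 < δ) (hy : 0 ≤ y) :
    powKernel δ y * y = δ * powKernel (δ + 1) y := by
  have hrpow : y ^ δ = y ^ (δ - 1) * y := by
    simpa using rpow_add_one' hy (y := δ - 1) (by simpa using hδ.ne')
  have := (Gamma_pos_of_pos hδ).ne'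
  rw [powKernel, powKernel, Gamma_add_one hδ.ne', add_sub_cancel_right, hrpow]
  field_simp

-- The binomial coefficients `binom(-γ, m)` of the Leibniz rule come from here: it is
-- `Γ(γ + m) = (-1)ᵐ m! binom(-γ, m) Γ(γ)`.
lemma powKernel_mul_neg_pow_div_factorial (hγ : 0 < γ) (hy : 0 ≤ y) (m : ℕ) :
    powKernel γ y * ((-y) ^ m / m.factorial) = genBinom (-γ) m * powKernel (γ + m) y := by
  induction m with
  | zero => simp [genBinom_zero]
  | succ m ih =>
    calc powKernel γ y * ((-y) ^ (m + 1) / (m + 1).factorial)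
        = powKernel γ y * ((-y) ^ m / m.factorial) * (-y / (m + 1)) := by
          rw [pow_succ, Nat.factorial_succ, Nat.cast_mul]
          field_simp
          push_cast
          ring
      _ = genBinom (-γ) m / (m + 1) * -(powKernel (γ + m) y * y) := by rw [ih]; ring
      _ = genBinom (-γ) (m + 1) * powKernel (γ + (m + 1 : ℕ)) y := by
          rw [powKernel_mul_self (by positivity) hy, genBinom_succ]
          push_cast
          ring_nf

lemma powKernel_add_natCast_le (hγ : 0 < γ) (hy : 0 ≤ y) (m : ℕ) :
    powKernel (γ + m) y ≤ powKernel γ y * (((1 + γ⁻¹) * y) ^ m / m.factorial) := by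
  induction m with
  | zero => simp
  | succ m ih =>
    have hγm : 0 < γ + m := by positivity
    have hratio : y / (γ + m) ≤ (1 + γ⁻¹) * y / (m + 1) := by
      rw [div_le_div_iff₀ hγm (by positivity)]
      have : (m + 1 : ℝ) ≤ (1 + γ⁻¹) * (γ + m) := by
        have : γ⁻¹ * γ = 1 := inv_mul_cancel₀ hγ.ne'
        have : 0 ≤ γ⁻¹ * m := by positivity
        linarith
      nlinarith
    calc powKernel (γ + (m + 1 : ℕ)) y = powKernel (γ + m) y * (y / (γ + m)) := by
          rw [← mul_div_assoc, powKernel_mul_self hγm hy, Nat.cast_succ, ← add_assoc]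
          field_simp
      _ ≤ powKernel γ y * (((1 + γ⁻¹) * y) ^ m / m.factorial) * ((1 + γ⁻¹) * y / (m + 1)) := by
          have := powKernel_nonneg hγ hy
          gcongr
      _ = powKernel γ y * (((1 + γ⁻¹) * y) ^ (m + 1) / (m + 1).factorial) := by
          rw [pow_succ, Nat.factorial_succ, Nat.cast_mul]
          field_simp
          push_cast
          ring

lemma integral_powKernel_sub (hγ : 0 < γ) (A X : ℝ) :
    ∫ t in A..X, powKernel γ (X - t) = powKernel (γ + 1) (X - A) := by
  simp only [powKernel]
  rw [intervalIntegral.integral_div,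
    intervalIntegral.integral_comp_sub_left (fun t => t ^ (γ - 1)), sub_self,
    integral_rpow (Or.inl (by linarith)), sub_add_cancel, zero_rpow hγ.ne', sub_zero,
    Gamma_add_one hγ.ne', add_sub_cancel_right, div_div]

lemma integral_powKernel_mul_powKernel (hγ : 0 < γ) (hδ : 0 < δ) {A X : ℝ} (hAX : A < X) :
    ∫ t in A..X, powKernel γ (X - t) * powKernel δ (t - A) = powKernel (γ + δ) (X - A) := by
  have hXA := sub_pos.2 hAX
  have hbeta : ∫ t in 0..X - A, t ^ (δ - 1) * (X - A - t) ^ (γ - 1)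
      = (X - A) ^ (γ + δ - 1) * (Gamma γ * Gamma δ / Gamma (γ + δ)) := by
    have hC := Complex.betaIntegral_scaled (δ : ℂ) (γ : ℂ) hXA
    rw [Complex.betaIntegral_eq_Gamma_mul_div _ _ (by simpa) (by simpa)] at hC
    apply Complex.ofReal_injective
    push_cast [Complex.ofReal_cpow hXA.le, ← Complex.Gamma_ofReal]
    rw [← intervalIntegral.integral_ofReal, add_comm (γ : ℂ), mul_comm (Complex.Gamma γ)]
    simp only [Complex.ofReal_sub] at hC
    rw [← hC]
    refine intervalIntegral.integral_congr fun t ht => ?_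
    rw [uIcc_of_le hXA.le] at ht
    push_cast [Complex.ofReal_cpow ht.1, Complex.ofReal_cpow (sub_nonneg.2 ht.2)]
    rfl
  have hγ' := (Gamma_pos_of_pos hγ).ne'
  have hδ' := (Gamma_pos_of_pos hδ).ne'
  calc ∫ t in A..X, powKernel γ (X - t) * powKernel δ (t - A)
      = ∫ t in A..X, (t - A) ^ (δ - 1) * (X - A - (t - A)) ^ (γ - 1) / (Gamma γ * Gamma δ) := by
        refine intervalIntegral.integral_congr fun t _ => ?_
        simp only [powKernel, sub_sub_sub_cancel_right]
        ring
    _ = powKernel (γ + δ) (X - A) := by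
        rw [intervalIntegral.integral_div, intervalIntegral.integral_comp_sub_right
          (fun t => t ^ (δ - 1) * (X - A - t) ^ (γ - 1)), sub_self, hbeta, powKernel]
        field_simp

lemma intervalIntegrable_powKernel_mul_powKernel (hγ : 0 < γ) (hδ : 0 < δ) {A X : ℝ}
    (hAX : A < X) :
    IntervalIntegrable (fun t => powKernel γ (X - t) * powKernel δ (t - A)) volume A X := by
  apply intervalIntegral.intervalIntegrable_of_integral_ne_zero
  rw [integral_powKernel_mul_powKernel hγ hδ hAX]
  exact (div_pos (rpow_pos_of_pos (sub_pos.2 hAX) _) (Gamma_pos_of_pos (add_pos hγ hδ))).ne'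

lemma intervalIntegrable_powKernel_mul (hγ : 0 < γ) {A X : ℝ} (hAX : A ≤ X) {G : ℝ → ℝ}
    (hG : ContinuousOn G (Icc A X)) :
    IntervalIntegrable (fun t => powKernel γ (X - t) * G t) volume A X := by
  have hrpow := ((intervalIntegral.intervalIntegrable_rpow' (a := X - A) (b := 0) (r := γ - 1)
    (by linarith)).div_const (Gamma γ)).comp_sub_left X
  simp only [sub_sub_cancel, sub_zero] at hrpow
  exact hrpow.mul_continuousOn (by rwa [uIcc_of_le hAX])

end PowKernel

section FractionalIntegral

variable {A X γ δ : ℝ} {F G : ℝ → ℝ}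

lemma rlI_zero (A : ℝ) (G : ℝ → ℝ) (X : ℝ) : rlI A 0 G X = G X := if_pos rfl

lemma rlI_eq_integral (hγ : γ ≠ 0) (A : ℝ) (G : ℝ → ℝ) (X : ℝ) :
    rlI A γ G X = ∫ t in A..X, powKernel γ (X - t) * G t := by
  rw [rlI, if_neg hγ, ← intervalIntegral.integral_const_mul]
  simp only [powKernel, div_eq_inv_mul, mul_assoc]

lemma rlI_one (A : ℝ) (G : ℝ → ℝ) (X : ℝ) : rlI A 1 G X = ∫ t in A..X, G t := by
  simp only [rlI_eq_integral one_ne_zero, powKernel_one_left, one_mul]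

lemma rlI_self (hγ : γ ≠ 0) (A : ℝ) (G : ℝ → ℝ) : rlI A γ G A = 0 := by
  rw [rlI_eq_integral hγ, intervalIntegral.integral_same]

lemma rlI_congr (hγ : γ ≠ 0) (hAX : A ≤ X) (hFG : EqOn F G (Ioo A X)) :
    rlI A γ F X = rlI A γ G X := by
  simp only [rlI_eq_integral hγ]
  exact intervalIntegral.integral_congr_Ioo_of_le hAX fun t ht => by simp only [hFG ht]

lemma rlI_add (hγ : γ ≠ 0)
    (hF : IntervalIntegrable (fun t => powKernel γ (X - t) * F t) volume A X)
    (hG : IntervalIntegrable (fun t => powKernel γ (X - t) * G t) volume A X) :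
    rlI A γ (fun t => F t + G t) X = rlI A γ F X + rlI A γ G X := by
  simp only [rlI_eq_integral hγ, mul_add]
  exact intervalIntegral.integral_add hF hG

lemma rlI_sub (hγ : 0 < γ) (hAX : A ≤ X) (hF : ContinuousOn F (Icc A X))
    (hG : ContinuousOn G (Icc A X)) :
    rlI A γ (fun t => F t - G t) X = rlI A γ F X - rlI A γ G X := by
  simp only [rlI_eq_integral hγ.ne', mul_sub]
  exact intervalIntegral.integral_sub (intervalIntegrable_powKernel_mul hγ hAX hF)
    (intervalIntegrable_powKernel_mul hγ hAX hG)

lemma rlI_const_mul (γ A : ℝ) (G : ℝ → ℝ) (X c : ℝ) :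
    rlI A γ (fun t => c * G t) X = c * rlI A γ G X := by
  rcases eq_or_ne γ 0 with rfl | hγ
  · simp only [rlI_zero]
  · simp only [rlI_eq_integral hγ, mul_left_comm _ c]
    exact intervalIntegral.integral_const_mul c _

lemma rlI_const (hγ : 0 < γ) (A X c : ℝ) :
    rlI A γ (fun _ => c) X = c * powKernel (γ + 1) (X - A) := by
  rw [rlI_eq_integral hγ.ne', intervalIntegral.integral_mul_const, integral_powKernel_sub hγ,
    mul_comm]

lemma rlI_powKernel (hγ : 0 < γ) (hδ : 0 < δ) (hAX : A < X) :
    rlI A γ (fun t => powKernel δ (t - A)) X = powKernel (γ + δ) (X - A) := by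
  rw [rlI_eq_integral hγ.ne', integral_powKernel_mul_powKernel hγ hδ hAX]

lemma rlI_sum_powKernel (hγ : 0 < γ) (hδ : 1 ≤ δ) (hAX : A ≤ X) (N : ℕ) (c : ℕ → ℝ) :
    rlI A γ (fun t => ∑ k ∈ Finset.range N, c k * powKernel (δ + k) (t - A)) X =
      ∑ k ∈ Finset.range N, c k * powKernel (γ + δ + k) (X - A) := by
  have hδk (k : ℕ) : 0 < δ + k := by positivity
  rcases hAX.eq_or_lt with rfl | hAX
  · have hzero (k : ℕ) : powKernel (γ + δ + k) 0 = 0 :=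
      powKernel_zero_right (by linarith [k.cast_nonneg (α := ℝ)])
    simp [rlI_self hγ.ne', hzero]
  simp only [rlI_eq_integral hγ.ne', Finset.mul_sum, mul_left_comm _ (c _)]
  rw [intervalIntegral.integral_finsetSum fun k _ =>
    (intervalIntegrable_powKernel_mul_powKernel hγ (hδk k) hAX).const_mul (c k)]
  refine Finset.sum_congr rfl fun k _ => ?_
  rw [intervalIntegral.integral_const_mul, integral_powKernel_mul_powKernel hγ (hδk k) hAX,
    add_assoc]

lemma abs_rlI_le (hγ : 0 < γ) (hAX : A ≤ X) {M : ℝ} (hM : ∀ t ∈ Icc A X, |G t| ≤ M) :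
    |rlI A γ G X| ≤ M * powKernel (γ + 1) (X - A) := by
  rw [rlI_eq_integral hγ.ne', ← rlI_const hγ, rlI_eq_integral hγ.ne',
    ← Real.norm_eq_abs]
  refine intervalIntegral.norm_integral_le_of_norm_le hAX (.of_forall fun t ht => ?_)
    (intervalIntegrable_powKernel_mul hγ hAX continuousOn_const)
  rw [norm_mul, norm_of_nonneg (powKernel_nonneg hγ (sub_nonneg.2 ht.2))]
  exact mul_le_mul_of_nonneg_left (hM t (Ioc_subset_Icc_self ht))
    (powKernel_nonneg hγ (sub_nonneg.2 ht.2))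

lemma exists_sum_powKernel_near (hG : ContinuousOn G (Icc A X)) {ε : ℝ} (hε : 0 < ε) :
    ∃ (N : ℕ) (c : ℕ → ℝ), ∀ t ∈ Icc A X,
      |G t - ∑ k ∈ Finset.range N, c k * powKernel (1 + k) (t - A)| ≤ ε := by
  obtain ⟨P, hP⟩ := exists_polynomial_near_of_continuousOn A X G hG ε hε
  refine ⟨(P.taylor A).natDegree + 1, fun k => (P.taylor A).coeff k * k.factorial, fun t ht => ?_⟩
  have hPt : ∑ k ∈ Finset.range ((P.taylor A).natDegree + 1),
      (P.taylor A).coeff k * k.factorial * powKernel (1 + k) (t - A) = P.eval t := by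
    rw [← sub_add_cancel t A, ← Polynomial.taylor_eval, sub_add_cancel,
      Polynomial.eval_eq_sum_range]
    refine Finset.sum_congr rfl fun k _ => ?_
    rw [powKernel, add_sub_cancel_left, add_comm (1 : ℝ), Gamma_nat_eq_factorial, rpow_natCast]
    field_simp
  rw [hPt, abs_sub_comm]
  exact (hP t ht).le

lemma continuous_sum_powKernel (hδ : 1 ≤ δ) (A : ℝ) (N : ℕ) (c : ℕ → ℝ) :
    Continuous fun t => ∑ k ∈ Finset.range N, c k * powKernel (δ + k) (t - A) :=
  continuous_finsetSum _ fun k _ => continuous_const.mul <|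
    (continuous_powKernel (by linarith [k.cast_nonneg (α := ℝ)])).comp (continuous_sub_right A)

lemma continuousOn_rlI (hγ : 0 < γ) (hG : ContinuousOn G (Icc A X)) :
    ContinuousOn (rlI A γ G) (Icc A X) := by
  obtain hAX | hAX := lt_or_ge X A
  · simp [Icc_eq_empty_of_lt hAX]
  refine continuousOn_of_uniform_approx_of_continuousOn fun u hu => ?_
  obtain ⟨ε, hε, hεu⟩ := Metric.mem_uniformity_dist.1 hu
  set M := powKernel (γ + 1) (X - A)
  have hM0 : 0 ≤ M := powKernel_nonneg (by linarith) (sub_nonneg.2 hAX)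
  obtain ⟨N, c, hc⟩ := exists_sum_powKernel_near hG (show 0 < ε / (M + 1) by positivity)
  refine ⟨_, (continuous_sum_powKernel (δ := γ + 1) (by linarith) A N c).continuousOn,
    fun y hy => hεu ?_⟩
  rw [dist_eq, ← rlI_sum_powKernel hγ le_rfl hy.1,
    ← rlI_sub hγ hy.1 (hG.mono (Icc_subset_Icc_right hy.2))
      (continuous_sum_powKernel le_rfl A N c).continuousOn]
  calc _ ≤ ε / (M + 1) * powKernel (γ + 1) (y - A) :=
        abs_rlI_le hγ hy.1 fun t ht => hc t ⟨ht.1, ht.2.trans hy.2⟩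
    _ ≤ ε / (M + 1) * M := by
        gcongr
        exact powKernel_le_powKernel (by linarith) (sub_nonneg.2 hy.1)
          (sub_le_sub_right hy.2 A)
    _ < ε := by
        rw [div_mul_eq_mul_div, div_lt_iff₀ (by positivity)]
        nlinarith

lemma abs_rlI_rlI_le {η ξ : ℝ} (hη : 0 < η) (hξ : 0 < ξ) (hAX : A ≤ X) {M : ℝ} (hM0 : 0 ≤ M)
    (hM : ∀ t ∈ Icc A X, |G t| ≤ M) :
    |rlI A η (rlI A ξ G) X| ≤
      M * (powKernel (ξ + 1) (X - A) * powKernel (η + 1) (X - A)) := by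
  rw [← mul_assoc]
  refine abs_rlI_le hη hAX fun t ht => ?_
  calc |rlI A ξ G t| ≤ M * powKernel (ξ + 1) (t - A) :=
        abs_rlI_le hξ ht.1 fun s hs => hM s ⟨hs.1, hs.2.trans ht.2⟩
    _ ≤ M * powKernel (ξ + 1) (X - A) :=
        mul_le_mul_of_nonneg_left (powKernel_le_powKernel (by linarith) (sub_nonneg.2 ht.1)
          (sub_le_sub_right ht.2 A)) hM0

lemma rlI_rlI_sub {η ξ : ℝ} (hη : 0 < η) (hξ : 0 < ξ) (hAX : A ≤ X)
    (hF : ContinuousOn F (Icc A X)) (hG : ContinuousOn G (Icc A X)) :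
    rlI A η (rlI A ξ fun t => F t - G t) X = rlI A η (rlI A ξ F) X - rlI A η (rlI A ξ G) X := by
  rw [← rlI_sub hη hAX (continuousOn_rlI hξ hF) (continuousOn_rlI hξ hG)]
  refine rlI_congr hη.ne' hAX fun t ht => ?_
  have hsub : Icc A t ⊆ Icc A X := Icc_subset_Icc_right ht.2.le
  exact rlI_sub hξ ht.1.le (hF.mono hsub) (hG.mono hsub)

-- Both sides are continuous in `G` for the uniform norm, and they agree on polynomials.
lemma rlI_rlI {η ξ : ℝ} (hη : 0 < η) (hξ : 0 < ξ) (hAX : A ≤ X) (hG : ContinuousOn G (Icc A X)) :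
    rlI A η (rlI A ξ G) X = rlI A (η + ξ) G X := by
  have hXA : 0 ≤ X - A := sub_nonneg.2 hAX
  have hφ {δ : ℝ} (hδ : 0 < δ) : 0 ≤ powKernel (δ + 1) (X - A) :=
    powKernel_nonneg (by linarith) hXA
  set K := powKernel (ξ + 1) (X - A) * powKernel (η + 1) (X - A) + powKernel (η + ξ + 1) (X - A)
  have hK : 0 ≤ K := add_nonneg (mul_nonneg (hφ hξ) (hφ hη)) (hφ (add_pos hη hξ))
  refine eq_of_forall_dist_le fun ε hε => ?_
  obtain ⟨N, c, hc⟩ := exists_sum_powKernel_near hG (show 0 < ε / (K + 1) by positivity)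
  set P : ℝ → ℝ := fun t => ∑ k ∈ Finset.range N, c k * powKernel (1 + k) (t - A)
  have hP : ContinuousOn P (Icc A X) := (continuous_sum_powKernel le_rfl A N c).continuousOn
  have hrlIP : rlI A η (rlI A ξ P) X = rlI A (η + ξ) P X := by
    rw [rlI_sum_powKernel (add_pos hη hξ) le_rfl hAX, rlI_congr hη.ne' hAX fun t ht =>
      rlI_sum_powKernel hξ le_rfl ht.1.le N c, rlI_sum_powKernel hη (by linarith) hAX]
    simp only [add_assoc]
  have hsub : rlI A η (rlI A ξ G) X - rlI A (η + ξ) G X =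
      rlI A η (rlI A ξ fun t => G t - P t) X - rlI A (η + ξ) (fun t => G t - P t) X := by
    rw [rlI_rlI_sub hη hξ hAX hG hP, rlI_sub (add_pos hη hξ) hAX hG hP, hrlIP,
      sub_sub_sub_cancel_right]
  rw [dist_eq, hsub]
  calc _ ≤ ε / (K + 1) * K := by
        rw [mul_add]
        exact (abs_sub _ _).trans (add_le_add (abs_rlI_rlI_le hη hξ hAX (by positivity) hc)
          (abs_rlI_le (add_pos hη hξ) hAX hc))
    _ ≤ ε := by
        rw [div_mul_eq_mul_div, div_le_iff₀ (by positivity)]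
        nlinarith

lemma rlI_eq_powKernel_add (hγ : 0 ≤ γ) (hAX : A ≤ X) (hF : ContDiff ℝ 1 F) :
    rlI A γ F X = F A * powKernel (γ + 1) (X - A) + rlI A (γ + 1) (deriv F) X := by
  have hF' : Continuous (deriv F) := hF.continuous_deriv le_rfl
  have hFTC (t : ℝ) : F t = F A + rlI A 1 (deriv F) t := by
    rw [rlI_one, intervalIntegral.integral_deriv_eq_sub (fun t _ => hF.differentiable one_ne_zero t)
      (hF'.intervalIntegrable A t), add_sub_cancel]
  rcases hγ.eq_or_lt with rfl | hγ
  · rw [rlI_zero, zero_add, powKernel_one_left, mul_one, ← hFTC]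
  have hI : ContinuousOn (rlI A 1 (deriv F)) (Icc A X) :=
    continuousOn_rlI one_pos hF'.continuousOn
  rw [rlI_congr hγ.ne' hAX fun t _ => hFTC t,
    rlI_add hγ.ne' (intervalIntegrable_powKernel_mul hγ hAX continuousOn_const)
      (intervalIntegrable_powKernel_mul hγ hAX hI), rlI_const hγ,
    rlI_rlI hγ one_pos hAX hF'.continuousOn]

lemma hasDerivAt_powKernel_add_one (hγ : 0 < γ) {y : ℝ} (hy : 0 < y) :
    HasDerivAt (powKernel (γ + 1)) (powKernel γ y) y := by
  have hΓ := (Gamma_pos_of_pos hγ).ne'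
  refine ((hasDerivAt_rpow_const (Or.inl hy.ne')).div_const _).congr_deriv ?_
  rw [powKernel, Gamma_add_one hγ.ne', add_sub_cancel_right]
  field_simp

lemma hasDerivAt_rlI (hγ : 0 ≤ γ) (hAX : A < X) (hF : ContDiff ℝ 1 F) :
    HasDerivAt (rlI A γ F) (F A * powKernel γ (X - A) + rlI A γ (deriv F) X) X := by
  have hF' : Continuous (deriv F) := hF.continuous_deriv le_rfl
  rcases hγ.eq_or_lt with rfl | hγ
  · simpa [rlI_zero, powKernel_zero_left, funext (rlI_zero A F)] using
      (hF.differentiable one_ne_zero X).hasDerivAt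
  have hI : ContinuousOn (rlI A γ (deriv F)) (Icc A (X + 1)) :=
    continuousOn_rlI hγ hF'.continuousOn
  have hint : HasDerivAt (fun y => ∫ t in A..y, rlI A γ (deriv F) t) (rlI A γ (deriv F) X) X :=
    intervalIntegral.integral_hasDerivAt_right
      ((hI.mono (Icc_subset_Icc_right (by linarith))).intervalIntegrable_of_Icc hAX.le)
      ((hI.mono Ioo_subset_Icc_self).stronglyMeasurableAtFilter isOpen_Ioo X ⟨hAX, by linarith⟩)
      (hI.continuousAt (Icc_mem_nhds hAX (by linarith)))
  have heq : rlI A γ F =ᶠ[𝓝 X] fun y =>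
      F A * powKernel (γ + 1) (y - A) + ∫ t in A..y, rlI A γ (deriv F) t := by
    filter_upwards [Ioi_mem_nhds hAX] with y hy
    rw [rlI_eq_powKernel_add hγ.le (le_of_lt hy) hF, add_comm γ 1, ← rlI_one,
      rlI_rlI one_pos hγ (le_of_lt hy) hF'.continuousOn]
  refine HasDerivAt.congr_of_eventuallyEq (.add (.const_mul _ ?_) hint) heq
  exact (hasDerivAt_powKernel_add_one hγ (sub_pos.2 hAX)).comp_sub_const X A

lemma rlD_eq (hγ : γ < 1) (hAX : A < X) (hF : ContDiff ℝ 1 F) :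
    rlD A γ F X = F A * powKernel (1 - γ) (X - A) + rlI A (1 - γ) (deriv F) X := by
  rw [rlD]
  split_ifs with hγ0
  · rw [rlI_eq_powKernel_add (neg_nonneg.2 hγ0) hAX.le hF, neg_add_eq_sub]
  · exact (hasDerivAt_rlI (sub_nonneg.2 hγ.le) hAX hF).deriv

end FractionalIntegral

section LeibnizRule

variable {A X α γ : ℝ} {h w F G : ℝ → ℝ}

lemma hasSum_rlI (hγ : 0 < γ) (hAX : A ≤ X) {F : ℕ → ℝ → ℝ} {u : ℕ → ℝ} (hu : Summable u)
    (hF : ∀ m, ContinuousOn (F m) (Icc A X)) (hFu : ∀ m, ∀ t ∈ Icc A X, |F m t| ≤ u m)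
    (hG : ∀ t ∈ Icc A X, HasSum (fun m => F m t) (G t)) :
    HasSum (fun m => rlI A γ (F m) X) (rlI A γ G X) := by
  have hsub : uIoc A X ⊆ Icc A X := uIoc_of_le hAX ▸ Ioc_subset_Icc_self
  simp only [rlI_eq_integral hγ.ne']
  refine intervalIntegral.hasSum_integral_of_dominated_convergence
    (fun m t => powKernel γ (X - t) * u m)
    (fun m => (intervalIntegrable_powKernel_mul hγ hAX (hF m)).def'.aestronglyMeasurable)
    (fun m => .of_forall fun t ht => ?_) (.of_forall fun t _ => hu.mul_left _) ?_
    (.of_forall fun t ht => (hG t (hsub ht)).mul_left _)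
  · have hφ : 0 ≤ powKernel γ (X - t) := powKernel_nonneg hγ (sub_nonneg.2 (hsub ht).2)
    rw [norm_mul, norm_of_nonneg hφ]
    exact mul_le_mul_of_nonneg_left (hFu m t (hsub ht)) hφ
  · simp only [tsum_mul_left]
    exact intervalIntegrable_powKernel_mul hγ hAX continuousOn_const

lemma rlI_sub_pow_mul (hγ : 0 < γ) (hAX : A ≤ X) (G : ℝ → ℝ) (m : ℕ) :
    rlI A γ (fun t => (t - X) ^ m / m.factorial * G t) X = genBinom (-γ) m * rlI A (γ + m) G X := by
  rw [rlI_eq_integral hγ.ne', rlI_eq_integral (by positivity),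
    ← intervalIntegral.integral_const_mul]
  refine intervalIntegral.integral_congr fun t ht => ?_
  rw [uIcc_of_le hAX] at ht
  rw [← mul_assoc, ← mul_assoc, ← neg_sub X t,
    powKernel_mul_neg_pow_div_factorial hγ (sub_nonneg.2 ht.2)]

-- Expand `h` in its Taylor series at the right endpoint `X` and integrate termwise.
lemma hasSum_rlI_mul (hγ : 0 < γ) (hAX : A ≤ X) (hh : EntireReal h)
    (hG : ContinuousOn G (Icc A X)) :
    HasSum (fun m : ℕ => genBinom (-γ) m * (iteratedDeriv m h X * rlI A (γ + m) G X))
      (rlI A γ (fun t => h t * G t) X) := by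
  obtain ⟨M, hM⟩ := isCompact_Icc.exists_bound_of_continuousOn hG
  have hsum := hasSum_rlI (G := fun t => h t * G t) hγ hAX
    ((hh.summable_abs_taylor X (sub_nonneg.2 hAX)).mul_right M)
    (F := fun m t => iteratedDeriv m h X * ((t - X) ^ m / m.factorial * G t))
    (fun m => by fun_prop) (fun m t ht => ?_) (fun t _ => ?_)
  · refine hsum.congr_fun fun m => ?_
    rw [rlI_const_mul, rlI_sub_pow_mul hγ hAX, mul_left_comm]
  · have htX : |t - X| ≤ X - A := by
      rw [abs_sub_comm, abs_of_nonneg (sub_nonneg.2 ht.2)]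
      exact sub_le_sub_left ht.1 X
    calc _ = |iteratedDeriv m h X| / m.factorial * |t - X| ^ m * |G t| := by
          rw [abs_mul, abs_mul, abs_div, abs_pow, Nat.abs_cast]
          ring
      _ ≤ |iteratedDeriv m h X| / m.factorial * (X - A) ^ m * M := by
          gcongr
          exact hM t ht
  · have := (hh.hasSum_taylor X (t - X)).mul_right (G t)
    rw [add_sub_cancel] at this
    exact this.congr_fun fun m => by ring

lemma hasSum_iteratedDeriv_mul_powKernel (hγ : 0 < γ) (hAX : A ≤ X) (hh : EntireReal h) :
    HasSum (fun m : ℕ => genBinom (-γ) m * (iteratedDeriv m h X * powKernel (γ + m) (X - A)))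
      (h A * powKernel γ (X - A)) := by
  have := (hh.hasSum_taylor X (A - X)).mul_right (powKernel γ (X - A))
  rw [add_sub_cancel] at this
  refine this.congr_fun fun m => ?_
  rw [mul_left_comm, ← powKernel_mul_neg_pow_div_factorial hγ (sub_nonneg.2 hAX), neg_sub]
  ring

lemma rlD_sub_natCast (hα : α < 1) (hAX : A < X) (hw : ContDiff ℝ 1 w) (m : ℕ) :
    rlD A (α - m) w X =
      w A * powKernel (1 - α + m) (X - A) + rlI A (1 - α + m) (deriv w) X := by
  rw [rlD_eq (by linarith [m.cast_nonneg (α := ℝ)]) hAX hw, sub_add]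

lemma rlD_sub_natCast_succ (hα : α < 1) (A : ℝ) (w : ℝ → ℝ) (X : ℝ) (m : ℕ) :
    rlD A (α - (m + 1 : ℕ)) w X = rlI A (1 - α + m) w X := by
  rw [rlD, if_pos (by push_cast; linarith [m.cast_nonneg (α := ℝ)])]
  congr 1
  push_cast
  ring

lemma rlD_mul (hα : α < 1) (hAX : A < X) (hF : ContDiff ℝ 1 F) (hG : ContDiff ℝ 1 G) :
    rlD A α (fun t => F t * G t) X =
      F A * powKernel (1 - α) (X - A) * G A + rlI A (1 - α) (fun t => F t * deriv G t) X +
        rlI A (1 - α) (fun t => deriv F t * G t) X := by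
  have hγ : 0 < 1 - α := sub_pos.2 hα
  have hderiv : deriv (fun t => F t * G t) = fun t => F t * deriv G t + deriv F t * G t := by
    ext t
    rw [deriv_fun_mul (hF.differentiable one_ne_zero t) (hG.differentiable one_ne_zero t),
      add_comm]
  have hFG' : Continuous fun t => F t * deriv G t :=
    hF.continuous.mul (hG.continuous_deriv le_rfl)
  have hF'G : Continuous fun t => deriv F t * G t :=
    (hF.continuous_deriv le_rfl).mul hG.continuous
  rw [rlD_eq hα hAX (hF.mul hG), hderiv,
    rlI_add hγ.ne' (intervalIntegrable_powKernel_mul hγ hAX.le hFG'.continuousOn)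
      (intervalIntegrable_powKernel_mul hγ hAX.le hF'G.continuousOn)]
  ring

lemma hasSum_rlD_mul (hα : α < 1) (hAX : A < X) (hh : EntireReal h) (hw : ContDiff ℝ 1 w) :
    HasSum (fun m : ℕ => genBinom α m * (iteratedDeriv m h X * rlD A (α - m) w X))
      (rlD A α (fun t => h t * w t) X) := by
  have hγ : 0 < 1 - α := sub_pos.2 hα
  have hw' : Continuous (deriv w) := hw.continuous_deriv le_rfl
  set T : ℕ → ℝ := fun m => iteratedDeriv m h X * rlD A (α - m) w X
  have hT : HasSum (fun m => genBinom (α - 1) m * T m)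
      (h A * powKernel (1 - α) (X - A) * w A + rlI A (1 - α) (fun t => h t * deriv w t) X) := by
    refine (((hasSum_iteratedDeriv_mul_powKernel hγ hAX.le hh).mul_right (w A)).add
      (hasSum_rlI_mul hγ hAX.le hh hw'.continuousOn)).congr_fun fun m => ?_
    simp only [T, rlD_sub_natCast hα hAX hw, neg_sub]
    ring
  have hT_succ : HasSum (fun m => genBinom (α - 1) m * T (m + 1))
      (rlI A (1 - α) (fun t => deriv h t * w t) X) := by
    refine (hasSum_rlI_mul hγ hAX.le hh.deriv hw.continuous.continuousOn).congr_fun fun m => ?_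
    simp only [T, rlD_sub_natCast_succ hα, iteratedDeriv_succ', neg_sub]
  rw [rlD_mul hα hAX (hh.contDiff) hw, ← hasSum_nat_add_iff' 1]
  convert ((hasSum_nat_add_iff' 1).2 hT).add hT_succ using 1
  · ext m
    rw [← add_mul, add_comm (genBinom (α - 1) (m + 1)), ← genBinom_add_one_succ, sub_add_cancel]
  · simp only [Finset.sum_range_one, genBinom_zero]
    ring

lemma exists_abs_rlD_sub_natCast_le (hα : α < 1) (hAX : A < X) (hw : ContDiff ℝ 1 w) :
    ∃ C ρ : ℝ, 0 ≤ ρ ∧ ∀ m : ℕ, |rlD A (α - m) w X| ≤ C * (ρ ^ m / m.factorial) := by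
  have hγ : 0 < 1 - α := sub_pos.2 hα
  have hXA : 0 ≤ X - A := sub_nonneg.2 hAX.le
  obtain ⟨M, hM⟩ := isCompact_Icc.exists_bound_of_continuousOn
    ((hw.continuous_deriv le_rfl).continuousOn (s := Icc A X))
  have hM0 : 0 ≤ M := (norm_nonneg _).trans (hM A (left_mem_Icc.2 hAX.le))
  have hφ₂ := powKernel_nonneg (add_pos hγ one_pos) hXA
  refine ⟨|w A| * powKernel (1 - α) (X - A) + M * powKernel (1 - α + 1) (X - A),
    (1 + (1 - α)⁻¹) * (X - A), by positivity, fun m => ?_⟩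
  set ρ := (1 + (1 - α)⁻¹) * (X - A)
  have hρ : (1 + (1 - α + 1)⁻¹) * (X - A) ≤ ρ := by
    have : (1 - α + 1)⁻¹ ≤ (1 - α)⁻¹ := inv_anti₀ hγ (by linarith)
    exact mul_le_mul_of_nonneg_right (by linarith) hXA
  rw [rlD_sub_natCast hα hAX hw]
  calc _ ≤ |w A| * powKernel (1 - α + m) (X - A) + M * powKernel (1 - α + 1 + m) (X - A) := by
        refine (abs_add_le _ _).trans (add_le_add ?_ ?_)
        · rw [abs_mul, abs_of_nonneg (powKernel_nonneg (by positivity) hXA)]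
        · rw [add_right_comm]
          exact abs_rlI_le (by positivity) hAX.le hM
    _ ≤ |w A| * (powKernel (1 - α) (X - A) * (ρ ^ m / m.factorial)) +
        M * (powKernel (1 - α + 1) (X - A) * (ρ ^ m / m.factorial)) := by
        gcongr
        · exact powKernel_add_natCast_le hγ hXA m
        · refine (powKernel_add_natCast_le (by positivity) hXA m).trans ?_
          gcongr
    _ = _ := by ring

lemma summable_pow_mul_abs_iteratedDeriv_mul_rlD (hα : α < 1) (hAX : A < X) (hh : EntireReal h)
    (hw : ContDiff ℝ 1 w) {R : ℝ} (hR : 0 ≤ R) :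
    Summable fun m : ℕ => R ^ m * |iteratedDeriv m h X * rlD A (α - m) w X| := by
  obtain ⟨C, ρ, hρ, hC⟩ := exists_abs_rlD_sub_natCast_le hα hAX hw
  refine .of_nonneg_of_le (fun m => by positivity) (fun m => ?_)
    ((hh.summable_abs_taylor X (mul_nonneg hR hρ)).mul_right C)
  calc R ^ m * |iteratedDeriv m h X * rlD A (α - m) w X|
      ≤ R ^ m * (|iteratedDeriv m h X| * (C * (ρ ^ m / m.factorial))) := by
        rw [abs_mul]
        gcongr
        exact hC m
    _ = |iteratedDeriv m h X| / m.factorial * (R * ρ) ^ m * C := by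
        rw [mul_pow]
        ring

end LeibnizRule

section DoubleSum

variable {p q S : ℝ} {T : ℕ → ℝ}

lemma summable_genBinom_mul_genBinom_mul
    (hT : ∀ R : ℝ, 0 ≤ R → Summable fun m => R ^ m * |T m|) :
    Summable fun i : ℕ × ℕ => genBinom p i.2 * genBinom q i.1 * T (i.2 + i.1) := by
  set C := 1 + |p| + |q|
  have hC : 0 ≤ 2 * C := by positivity
  have hgeom : Summable fun n : ℕ => (1 / 2 : ℝ) ^ n := summable_geometric_two
  refine .of_norm_bounded ((hgeom.mul_of_nonneg hgeom (fun n => by positivity)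
    (fun n => by positivity)).mul_right (∑' m, (2 * C) ^ m * |T m|)) fun ⟨l, n⟩ => ?_
  have hp : |genBinom p n| ≤ C ^ n :=
    (abs_genBinom_le p n).trans (pow_le_pow_left₀ (by positivity) (by linarith [abs_nonneg q]) n)
  have hq : |genBinom q l| ≤ C ^ l :=
    (abs_genBinom_le q l).trans (pow_le_pow_left₀ (by positivity) (by linarith [abs_nonneg p]) l)
  calc ‖genBinom p n * genBinom q l * T (n + l)‖ ≤ C ^ n * C ^ l * |T (n + l)| := by
        rw [norm_mul, norm_mul]
        gcongr
        exacts [hp, hq, le_rfl]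
    _ = (1 / 2) ^ l * (1 / 2) ^ n * ((2 * C) ^ (n + l) * |T (n + l)|) := by
        rw [mul_pow, pow_add, pow_add, one_div, inv_pow, inv_pow]
        field_simp
    _ ≤ (1 / 2) ^ l * (1 / 2) ^ n * ∑' m, (2 * C) ^ m * |T m| := by
        gcongr
        exact (hT _ hC).le_tsum _ fun m _ => by positivity

lemma hasSum_genBinom_mul_genBinom_mul (hT : ∀ R : ℝ, 0 ≤ R → Summable fun m => R ^ m * |T m|)
    (hS : HasSum (fun m => genBinom (p + q) m * T m) S) :
    HasSum (fun i : ℕ × ℕ => genBinom p i.2 * genBinom q i.1 * T (i.2 + i.1)) S := by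
  have hsum := summable_genBinom_mul_genBinom_mul (p := p) (q := q) hT
  have hsigma := (Finset.HasAntidiagonal.sigmaAntidiagonalEquivProd.hasSum_iff).2 hsum.hasSum
  have hanti (m : ℕ) :
      ∑ i ∈ antidiagonal m, genBinom p i.2 * genBinom q i.1 * T (i.2 + i.1) =
        genBinom (p + q) m * T m := by
    rw [← sum_antidiagonal_genBinom_mul_genBinom, Finset.sum_mul,
      ← Finset.Nat.sum_antidiagonal_swap]
    refine Finset.sum_congr rfl fun i hi => ?_
    rw [← Finset.HasAntidiagonal.mem_antidiagonal.1 hi, Prod.swap]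
  rw [hS.unique (hsigma.sigma fun m => by
    rw [← hanti m, ← Finset.sum_coe_sort]
    exact hasSum_fintype _)]
  exact hsum.hasSum

end DoubleSum

section HilferDerivative

variable {A X α β η ξ : ℝ} {F : ℝ → ℝ}

lemma rlI_deriv_rlI (hη : 0 < η) (hξ : 0 ≤ ξ) (hAX : A < X) (hF : ContDiff ℝ 1 F) :
    rlI A η (deriv (rlI A ξ F)) X =
      F A * powKernel (η + ξ) (X - A) + rlI A (η + ξ) (deriv F) X -
        rlI A ξ F A * powKernel η (X - A) := by
  have hF' : Continuous (deriv F) := hF.continuous_deriv le_rfl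
  rw [rlI_congr hη.ne' hAX.le fun y hy => (hasDerivAt_rlI hξ hy.1 hF).deriv]
  rcases hξ.eq_or_lt with rfl | hξ
  · simp [powKernel_zero_left, rlI_zero]
  · rw [rlI_add hη.ne' ((intervalIntegrable_powKernel_mul_powKernel hη hξ hAX).const_mul (F A)
          |>.congr fun t _ => by ring)
        (intervalIntegrable_powKernel_mul hη hAX.le (continuousOn_rlI hξ hF'.continuousOn)),
      rlI_const_mul, rlI_powKernel hη hξ hAX, rlI_rlI hη hξ hAX.le hF'.continuousOn,
      rlI_self hξ.ne', zero_mul, sub_zero]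

lemma hilD_eq_rlD_sub (hα : α < 1) (hβ0 : 0 < β) (hβ1 : β ≤ 1) (hAX : A < X)
    (hF : ContDiff ℝ 1 F) :
    hilD A α β F X =
      rlD A α F X - rlI A ((1 - β) * (1 - α)) F A * powKernel (β * (1 - α)) (X - A) := by
  have hη : 0 < β * (1 - α) := mul_pos hβ0 (sub_pos.2 hα)
  have hξ : 0 ≤ (1 - β) * (1 - α) := mul_nonneg (sub_nonneg.2 hβ1) (sub_nonneg.2 hα.le)
  have hηξ : β * (1 - α) + (1 - β) * (1 - α) = 1 - α := by ring
  have hrlI := rlI_deriv_rlI hη hξ hAX hF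
  rwa [hηξ, ← rlD_eq hα hAX hF] at hrlI

end HilferDerivative

section ChangeOfVariable

variable {a b x y α β γ ξ : ℝ} {Ψ f g F : ℝ → ℝ}

lemma map_left_lt_of_deriv_pos (hΨ : ContinuousOn Ψ (Icc a b))
    (hΨ' : ∀ t ∈ Ioo a b, 0 < deriv Ψ t) (hy : y ∈ Ioo a b) : Ψ a < Ψ y :=
  strictMonoOn_of_deriv_pos (convex_Icc a b) hΨ (by rwa [interior_Icc])
    (left_mem_Icc.2 (hy.1.trans hy.2).le) (Ioo_subset_Icc_self hy) hy.1

lemma psiI_congr (hγ : γ ≠ 0) (hax : a ≤ x) (hfg : EqOn f g (Ioo a x)) :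
    psiI a Ψ f γ x = psiI a Ψ g γ x := by
  simp only [psiI, if_neg hγ]
  congr 1
  exact intervalIntegral.integral_congr_Ioo_of_le hax fun t ht => by simp only [hfg ht]

lemma psiI_comp (hΨ : ContinuousOn Ψ (Icc a b)) (hΨ' : ∀ t ∈ Ioo a b, 0 < deriv Ψ t)
    (hy : y ∈ Icc a b) (γ : ℝ) (G : ℝ → ℝ) :
    psiI a Ψ (fun t => G (Ψ t)) γ y = rlI (Ψ a) γ G (Ψ y) := by
  have hpos : ∀ t ∈ Ioo (min a y) (max a y), 0 < deriv Ψ t := by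
    rw [min_eq_left hy.1, max_eq_right hy.1]
    exact fun t ht => hΨ' t ⟨ht.1, ht.2.trans_le hy.2⟩
  have hcont : ContinuousOn Ψ (uIcc a y) := by
    rw [uIcc_of_le hy.1]
    exact hΨ.mono (Icc_subset_Icc_right hy.2)
  rw [psiI, rlI, ← intervalIntegral.integral_deriv_smul_comp_of_deriv_nonneg hcont
    (fun t ht => (differentiableAt_of_deriv_ne_zero (hpos t ht).ne').hasDerivAt)
    fun t ht => (hpos t ht).le]
  simp only [Function.comp_apply, smul_eq_mul, mul_assoc]

lemma psiI_self (hγ : γ ≠ 0) (a : ℝ) (Ψ f : ℝ → ℝ) : psiI a Ψ f γ a = 0 := by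
  simp [psiI, hγ]

-- Only `k = 0` contributes: a fractional integral of positive order vanishes at its base point.
lemma hasSum_psiI_self (hξ : 0 ≤ ξ) (a : ℝ) (Ψ h w : ℝ → ℝ) :
    HasSum (fun k : ℕ => genBinom (-ξ) k * psiI a Ψ (fun t => w (Ψ t)) (ξ + k) a *
        iteratedDeriv k h (Ψ a))
      (rlI (Ψ a) ξ (fun s => h s * w s) (Ψ a)) := by
  have hzero : genBinom (-ξ) 0 * psiI a Ψ (fun t => w (Ψ t)) (ξ + (0 : ℕ)) a *
      iteratedDeriv 0 h (Ψ a) = rlI (Ψ a) ξ (fun s => h s * w s) (Ψ a) := by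
    rcases eq_or_ne ξ 0 with rfl | hξ
    · simp [genBinom_zero, rlI_zero, psiI, mul_comm]
    · simp [psiI_self hξ, rlI_self hξ]
  rw [← hzero]
  refine hasSum_single 0 fun k hk => ?_
  have : 0 < (k : ℝ) := by positivity
  rw [psiI_self (by positivity), mul_zero, zero_mul]

lemma inv_deriv_mul_deriv_psiI_comp (hΨ : ContinuousOn Ψ (Icc a b))
    (hΨ' : ∀ t ∈ Ioo a b, 0 < deriv Ψ t) (hγ : 0 ≤ γ) (hF : ContDiff ℝ 1 F) (hy : y ∈ Ioo a b) :
    (deriv Ψ y)⁻¹ * deriv (fun z => psiI a Ψ (fun t => F (Ψ t)) γ z) y =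
      deriv (fun s => rlI (Ψ a) γ F s) (Ψ y) := by
  have hpos : deriv Ψ y ≠ 0 := (hΨ' y hy).ne'
  have hlt : Ψ a < Ψ y := map_left_lt_of_deriv_pos hΨ hΨ' hy
  have hcomp : (fun z => psiI a Ψ (fun t => F (Ψ t)) γ z) =ᶠ[𝓝 y] rlI (Ψ a) γ F ∘ Ψ := by
    filter_upwards [Ioo_mem_nhds hy.1 hy.2] with z hz
    exact psiI_comp hΨ hΨ' (Ioo_subset_Icc_self hz) γ F
  rw [hcomp.deriv_eq, deriv_comp y (hasDerivAt_rlI hγ hlt hF).differentiableAt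
    (differentiableAt_of_deriv_ne_zero hpos)]
  field_simp

lemma psiRLD_comp (hΨ : ContinuousOn Ψ (Icc a b)) (hΨ' : ∀ t ∈ Ioo a b, 0 < deriv Ψ t)
    (hγ : γ < 1) (hF : ContDiff ℝ 1 F) (hx : x ∈ Ioo a b) :
    psiRLD a Ψ (fun t => F (Ψ t)) γ x = rlD (Ψ a) γ F (Ψ x) := by
  rw [psiRLD, rlD, psiI_comp hΨ hΨ' (Ioo_subset_Icc_self hx),
    inv_deriv_mul_deriv_psiI_comp hΨ hΨ' (sub_nonneg.2 hγ.le) hF hx]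

lemma psiHD_comp (hΨ : ContinuousOn Ψ (Icc a b)) (hΨ' : ∀ t ∈ Ioo a b, 0 < deriv Ψ t)
    (hα : α < 1) (hβ0 : 0 < β) (hβ1 : β ≤ 1) (hF : ContDiff ℝ 1 F) (hx : x ∈ Ioo a b) :
    psiHD a Ψ (fun t => F (Ψ t)) α β x = hilD (Ψ a) α β F (Ψ x) := by
  have hη : 0 < β * (1 - α) := mul_pos hβ0 (sub_pos.2 hα)
  have hξ : 0 ≤ (1 - β) * (1 - α) := mul_nonneg (sub_nonneg.2 hβ1) (sub_nonneg.2 hα.le)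
  rw [psiHD, hilD, ← psiI_comp hΨ hΨ' (Ioo_subset_Icc_self hx)]
  exact psiI_congr hη.ne' hx.1.le fun y hy =>
    inv_deriv_mul_deriv_psiI_comp hΨ hΨ' hξ hF ⟨hy.1, hy.2.trans hx.2⟩

end ChangeOfVariable

theorem leibniz_type_rule_I_general {a b x α β : ℝ} {Ψ h w : ℝ → ℝ} (hα : α < 1) (hβ0 : 0 < β)
    (hβ1 : β ≤ 1) (hΨ : ContinuousOn Ψ (Icc a b)) (hΨ' : ∀ t ∈ Ioo a b, 0 < deriv Ψ t)
    (hh : EntireReal h) (hw : ContDiff ℝ 1 w) (hx : x ∈ Ioo a b) :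
    (∀ l : ℕ, Summable (fun n : ℕ =>
        genBinom (-((1 - β) * (1 - α))) n * genBinom (α + (1 - β) * (1 - α)) l *
          iteratedDeriv (n + l) h (Ψ x) * psiRLD a Ψ (fun t => w (Ψ t)) (α - (n + l)) x)) ∧
    Summable (fun l : ℕ => ∑' n : ℕ,
        genBinom (-((1 - β) * (1 - α))) n * genBinom (α + (1 - β) * (1 - α)) l *
          iteratedDeriv (n + l) h (Ψ x) * psiRLD a Ψ (fun t => w (Ψ t)) (α - (n + l)) x) ∧
    Summable (fun k : ℕ =>
        genBinom (-((1 - β) * (1 - α))) k *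
          psiI a Ψ (fun t => w (Ψ t)) ((1 - β) * (1 - α) + k) a * iteratedDeriv k h (Ψ a) *
          (Ψ x - Ψ a) ^ (-(α + (1 - β) * (1 - α))) / Gamma (β * (1 - α))) ∧
    psiHD a Ψ (fun t => h (Ψ t) * w (Ψ t)) α β x =
      (∑' l : ℕ, ∑' n : ℕ,
        genBinom (-((1 - β) * (1 - α))) n * genBinom (α + (1 - β) * (1 - α)) l *
          iteratedDeriv (n + l) h (Ψ x) * psiRLD a Ψ (fun t => w (Ψ t)) (α - (n + l)) x) -
      ∑' k : ℕ,
        genBinom (-((1 - β) * (1 - α))) k *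
          psiI a Ψ (fun t => w (Ψ t)) ((1 - β) * (1 - α) + k) a * iteratedDeriv k h (Ψ a) *
          (Ψ x - Ψ a) ^ (-(α + (1 - β) * (1 - α))) / Gamma (β * (1 - α)) := by
  have hlt : Ψ a < Ψ x := map_left_lt_of_deriv_pos hΨ hΨ' hx
  have hhw : ContDiff ℝ 1 fun s => h s * w s := hh.contDiff.mul hw
  have hdouble := hasSum_genBinom_mul_genBinom_mul
    (p := -((1 - β) * (1 - α))) (q := α + (1 - β) * (1 - α))
    (fun R hR => summable_pow_mul_abs_iteratedDeriv_mul_rlD hα hlt hh hw hR)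
    (by simpa only [neg_add_cancel_comm_assoc] using hasSum_rlD_mul hα hlt hh hw)
  have hRLD (m : ℕ) :
      rlD (Ψ a) (α - m) w (Ψ x) = psiRLD a Ψ (fun t => w (Ψ t)) (α - m) x :=
    (psiRLD_comp hΨ hΨ' (by linarith [m.cast_nonneg (α := ℝ)]) hw hx).symm
  simp only [hRLD] at hdouble
  simp only [← mul_assoc, Nat.cast_add] at hdouble
  have hboundary := ((hasSum_psiI_self (mul_nonneg (sub_nonneg.2 hβ1) (sub_nonneg.2 hα.le)) a Ψ h
    w).mul_right ((Ψ x - Ψ a) ^ (-(α + (1 - β) * (1 - α))))).div_const (Gamma (β * (1 - α)))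
  refine ⟨hdouble.summable.prod_factor, hdouble.summable.prod, hboundary.summable, ?_⟩
  rw [hboundary.tsum_eq, ← hdouble.summable.tsum_prod, hdouble.tsum_eq,
    psiHD_comp hΨ hΨ' hα hβ0 hβ1 hhw hx, hilD_eq_rlD_sub hα hβ0 hβ1 hlt hhw, powKernel,
    mul_div_assoc, show β * (1 - α) - 1 = -(α + (1 - β) * (1 - α)) by ring]

/-- Leibniz Type Rule I for the Ψ-Hilfer fractional derivative, in terms
of Ψ-Riemann–Liouville fractional derivatives.  The inner sum `Σ_{m=l}^∞` is written
as a sum over `n` with `m = n + l`. -/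
theorem leibniz_type_rule_I
    (a b : ℝ) (hab : a < b) (α β : ℝ)
    (hα0 : 0 < α) (hα1 : α < 1) (hβ0 : 0 < β) (hβ1 : β ≤ 1)
    (Ψ : ℝ → ℝ)
    (hΨmono : StrictMonoOn Ψ (Set.Icc a b))
    (hΨC1 : ContDiffOn ℝ 1 Ψ (Set.Icc a b))
    (hΨpos : ∀ t ∈ Set.Icc a b, 0 < deriv Ψ t)
    (f g h w : ℝ → ℝ)
    (hf : f = fun t => h (Ψ t)) (hg : g = fun t => w (Ψ t))
    (hh : EntireReal h) (hw : EntireReal w)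
    (x : ℝ) (hx : x ∈ Set.Ioo a b) :
    (∀ l : ℕ, Summable (fun n : ℕ =>
        genBinom (-((1 - β) * (1 - α))) n * genBinom (α + (1 - β) * (1 - α)) l *
          iteratedDeriv (n + l) h (Ψ x) * psiRLD a Ψ g (α - (n + l)) x)) ∧
    Summable (fun l : ℕ => ∑' n : ℕ,
        genBinom (-((1 - β) * (1 - α))) n * genBinom (α + (1 - β) * (1 - α)) l *
          iteratedDeriv (n + l) h (Ψ x) * psiRLD a Ψ g (α - (n + l)) x) ∧
    Summable (fun k : ℕ =>
        genBinom (-((1 - β) * (1 - α))) k * psiI a Ψ g ((1 - β) * (1 - α) + k) a *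
          iteratedDeriv k h (Ψ a) *
          (Ψ x - Ψ a) ^ (-(α + (1 - β) * (1 - α))) / Real.Gamma (β * (1 - α))) ∧
    psiHD a Ψ (fun t => f t * g t) α β x =
      (∑' l : ℕ, ∑' n : ℕ,
        genBinom (-((1 - β) * (1 - α))) n * genBinom (α + (1 - β) * (1 - α)) l *
          iteratedDeriv (n + l) h (Ψ x) * psiRLD a Ψ g (α - (n + l)) x) -
      ∑' k : ℕ,
        genBinom (-((1 - β) * (1 - α))) k * psiI a Ψ g ((1 - β) * (1 - α) + k) a *
          iteratedDeriv k h (Ψ a) *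
          (Ψ x - Ψ a) ^ (-(α + (1 - β) * (1 - α))) / Real.Gamma (β * (1 - α)) := by
  subst hf hg
  exact leibniz_type_rule_I_general hα1 hβ0 hβ1 hΨC1.continuousOn
    (fun t ht => hΨpos t (Ioo_subset_Icc_self ht)) hh hw.contDiff hx
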